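/- arXiv:0907.0887 — 3 statements merged into one kernel-verified Lean document; each statement's English description precedes it below -/
import Mathlib

section
/- Let V ∈ 𝒱(r, d−1) be a (d−1)-dimensional lattice r-subspace. Then there exists a nonzero vector g ∈ Γ whose orthogonal projection onto V vanishes (g_V = 0) and which satisfies |g| ≤ 2 d(Γ) ω_{d−1}^{−1} π^{1−d} r^{d−1}. -/
noncomputable section

open Set Submodule Module MeasureTheory Relation
open scoped RealInnerProductSpace

variable {d : ℕ}

/-- The lattice Γ generated over ℤ by the basis `B` of ℝ^d. -/
def latticeOf (B : Basis (Fin d) ℝ (EuclideanSpace ℝ (Fin d))) :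
    Submodule ℤ (EuclideanSpace ℝ (Fin d)) :=
  Submodule.span ℤ (Set.range B)

/-- The determinant d(Γ) of the lattice generated by `B`. -/
def latDet (B : Basis (Fin d) ℝ (EuclideanSpace ℝ (Fin d))) : ℝ :=
  |(EuclideanSpace.basisFun (Fin d) ℝ).toBasis.det (fun i => B i)|

/-- The dual lattice Γ† = {θ : θ·g ∈ 2πℤ for all g ∈ Γ}. -/
def dualLattice (B : Basis (Fin d) ℝ (EuclideanSpace ℝ (Fin d))) :
    Set (EuclideanSpace ℝ (Fin d)) :=
  {θ | ∀ g ∈ latticeOf B, ∃ k : ℤ, ⟪θ, g⟫ = 2 * Real.pi * k}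

/-- Θ_r : nonzero dual lattice vectors of norm at most r. -/
def Theta (B : Basis (Fin d) ℝ (EuclideanSpace ℝ (Fin d))) (r : ℝ) :
    Set (EuclideanSpace ℝ (Fin d)) :=
  {θ | θ ∈ dualLattice B ∧ θ ≠ 0 ∧ ‖θ‖ ≤ r}

/-- Θ_r⁰ : dual lattice vectors of norm at most r (including 0). -/
def Theta0 (B : Basis (Fin d) ℝ (EuclideanSpace ℝ (Fin d))) (r : ℝ) :
    Set (EuclideanSpace ℝ (Fin d)) :=
  {θ | θ ∈ dualLattice B ∧ ‖θ‖ ≤ r}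

/-- A lattice r-subspace: a subspace spanned by dual lattice vectors from Θ_r⁰. -/
def IsLatticeSubspace (B : Basis (Fin d) ℝ (EuclideanSpace ℝ (Fin d))) (r : ℝ)
    (V : Submodule ℝ (EuclideanSpace ℝ (Fin d))) : Prop :=
  ∃ S : Set (EuclideanSpace ℝ (Fin d)), S ⊆ Theta0 B r ∧ V = Submodule.span ℝ S

/-- Orthogonal projection ξ_V onto a subspace, viewed in the ambient space. -/
def projV (V : Submodule ℝ (EuclideanSpace ℝ (Fin d))) (ξ : EuclideanSpace ℝ (Fin d)) :
    EuclideanSpace ℝ (Fin d) :=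
  (orthogonalProjection V ξ : EuclideanSpace ℝ (Fin d))

/-- ω_n: the volume of the unit ball in ℝ^n. -/
def unitBallVol (n : ℕ) : ℝ :=
  (MeasureTheory.volume (Metric.ball (0 : EuclideanSpace ℝ (Fin n)) 1)).toReal

/-- The resonant layer Λ(θ) (= ℝ^d when θ = 0). -/
def layer (ρ a : ℝ) (θ : EuclideanSpace ℝ (Fin d)) : Set (EuclideanSpace ℝ (Fin d)) :=
  {ξ | θ = 0 ∨ |⟪ξ, θ⟫| < ρ ^ a * ‖θ‖}

/-- Υ_θ(ξ): the points θ-resonant congruent to ξ. -/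
def upsTheta (ρ a : ℝ) (θ ξ : EuclideanSpace ℝ (Fin d)) : Set (EuclideanSpace ℝ (Fin d)) :=
  {η | ξ ∈ layer ρ a θ ∧ η ∈ layer ρ a θ ∧ ∃ l : ℤ, ξ - η = (l : ℝ) • θ}

/-- One step of resonant congruence (with some θ ∈ Θ_r⁰). -/
def resStep (B : Basis (Fin d) ℝ (EuclideanSpace ℝ (Fin d))) (ρ a r : ℝ)
    (ξ η : EuclideanSpace ℝ (Fin d)) : Prop :=
  ∃ θ ∈ Theta0 B r, η ∈ upsTheta ρ a θ ξ

/-- Υ(ξ): all points resonant congruent to ξ. -/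
def Ups (B : Basis (Fin d) ℝ (EuclideanSpace ℝ (Fin d))) (ρ a r : ℝ)
    (ξ : EuclideanSpace ℝ (Fin d)) : Set (EuclideanSpace ℝ (Fin d)) :=
  {η | Relation.ReflTransGen (resStep B ρ a r) ξ η}

/-- N(ξ) = Υ(ξ) − ξ. -/
def resN (B : Basis (Fin d) ℝ (EuclideanSpace ℝ (Fin d))) (ρ a r : ℝ)
    (ξ : EuclideanSpace ℝ (Fin d)) : Set (EuclideanSpace ℝ (Fin d)) :=
  {m | ξ + m ∈ Ups B ρ a r ξ}

/-- Ξ₁(V) = {ξ : |ξ_V| < ρ^{α_n}}, n = dim V. -/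
def Xi1 (ρ : ℝ) (α : ℕ → ℝ) (V : Submodule ℝ (EuclideanSpace ℝ (Fin d))) :
    Set (EuclideanSpace ℝ (Fin d)) :=
  {ξ | ‖projV V ξ‖ < ρ ^ α (Module.finrank ℝ V)}

/-- Ξ₂(V) = ∪_{ξ ∈ Ξ₁(V)} Υ(ξ). -/
def Xi2 (B : Basis (Fin d) ℝ (EuclideanSpace ℝ (Fin d))) (ρ r : ℝ) (α : ℕ → ℝ)
    (V : Submodule ℝ (EuclideanSpace ℝ (Fin d))) : Set (EuclideanSpace ℝ (Fin d)) :=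
  {η | ∃ ξ ∈ Xi1 ρ α V, η ∈ Ups B ρ (α 1) r ξ}

/-- Ξ(V): Ξ₂(V) minus the Ξ₂(W) for all lattice r-subspaces W of larger dimension. -/
def Xi (B : Basis (Fin d) ℝ (EuclideanSpace ℝ (Fin d))) (ρ r : ℝ) (α : ℕ → ℝ)
    (V : Submodule ℝ (EuclideanSpace ℝ (Fin d))) : Set (EuclideanSpace ℝ (Fin d)) :=
  Xi2 B ρ r α V \
    ⋃ W ∈ {W : Submodule ℝ (EuclideanSpace ℝ (Fin d)) |
        IsLatticeSubspace B r W ∧ Module.finrank ℝ V < Module.finrank ℝ W},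
      Xi2 B ρ r α W

/-- The standing conditions on the parameters ρ ≥ 1, r, κ > 0 and the exponents α_j:
0 = α₀, α_{n+1} > α_n + 2κd², α_d < 1, r ≤ ρ^κ, and r ≥ r₀ (i.e. Θ_r⁰ spans ℝ^d). -/
def GoodParams (B : Basis (Fin d) ℝ (EuclideanSpace ℝ (Fin d))) (ρ r κ : ℝ)
    (α : ℕ → ℝ) : Prop :=
  1 ≤ ρ ∧ 0 < κ ∧ α 0 = 0 ∧ (∀ n < d, α n + 2 * κ * (d : ℝ) ^ 2 < α (n + 1)) ∧
    α d < 1 ∧ r ≤ ρ ^ κ ∧ Submodule.span ℝ (Theta0 B r) = ⊤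


/-- Balls of equal radius in Euclidean spaces of equal dimension have equal volume. -/
lemma volume_ball_eq_of_finrank_eq {E F : Type*}
    [NormedAddCommGroup E] [InnerProductSpace ℝ E] [FiniteDimensional ℝ E]
    [MeasurableSpace E] [BorelSpace E]
    [NormedAddCommGroup F] [InnerProductSpace ℝ F] [FiniteDimensional ℝ F]
    [MeasurableSpace F] [BorelSpace F]
    (h : Module.finrank ℝ E = Module.finrank ℝ F) (a : ℝ) :
    volume (Metric.ball (0 : E) a) = volume (Metric.ball (0 : F) a) := by
  have e : E ≃ₗᵢ[ℝ] F :=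
    (stdOrthonormalBasis ℝ E).equiv (stdOrthonormalBasis ℝ F) (finCongr h)
  rw [← e.measurePreserving.measure_preimage measurableSet_ball.nullMeasurableSet]
  simp [LinearIsometryEquiv.preimage_ball]

/-- The volume of a cylinder around a subspace is the product of the volumes of its two balls. -/
lemma volume_norm_projection_lt {E : Type*}
    [NormedAddCommGroup E] [InnerProductSpace ℝ E] [FiniteDimensional ℝ E]
    [MeasurableSpace E] [BorelSpace E] (V : Submodule ℝ E) (a b : ℝ) :
    volume {x : E | ‖V.orthogonalProjectionOnto x‖ < a ∧ ‖Vᗮ.orthogonalProjectionOnto x‖ < b} =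
      volume (Metric.ball (0 : V) a) * volume (Metric.ball (0 : Vᗮ) b) := by
  have h := (WithLp.volume_preserving_ofLp V Vᗮ).comp V.orthogonalDecomposition.measurePreserving
  rw [← Measure.prod_prod, ← Measure.volume_eq_prod, ← h.measure_preimage
    (measurableSet_ball.prod measurableSet_ball).nullMeasurableSet]
  congr 1
  ext x
  simp [Submodule.orthogonalDecomposition_apply]

/-- The fundamental domain of a lattice in Euclidean space has volume the lattice determinant. -/
lemma volume_fundamentalDomain_eq_latDet (B : Basis (Fin d) ℝ (EuclideanSpace ℝ (Fin d))) :
    volume (ZSpan.fundamentalDomain B) = ENNReal.ofReal (latDet B) := by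
  rw [ZSpan.measure_fundamentalDomain B volume (EuclideanSpace.basisFun (Fin d) ℝ).toBasis,
    measure_congr (ZSpan.fundamentalDomain_ae_parallelepiped _ volume),
    OrthonormalBasis.coe_toBasis, OrthonormalBasis.volume_parallelepiped, mul_one]
  rfl

lemma latDet_pos (B : Basis (Fin d) ℝ (EuclideanSpace ℝ (Fin d))) : 0 < latDet B :=
  abs_pos.mpr (Basis.isUnit_det _ B).ne_zero

lemma ofReal_unitBallVol (n : ℕ) :
    ENNReal.ofReal (unitBallVol n) = volume (Metric.ball (0 : EuclideanSpace ℝ (Fin n)) 1) :=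
  ENNReal.ofReal_toReal measure_ball_lt_top.ne

lemma unitBallVol_pos (n : ℕ) : 0 < unitBallVol n :=
  ENNReal.toReal_pos (Metric.measure_ball_pos volume _ one_pos).ne' measure_ball_lt_top.ne

/-- The volume of a cylinder around a hyperplane. -/
lemma volume_norm_projection_lt_of_finrank_eq {E : Type*}
    [NormedAddCommGroup E] [InnerProductSpace ℝ E] [FiniteDimensional ℝ E]
    [MeasurableSpace E] [BorelSpace E] {n : ℕ} (hE : Module.finrank ℝ E = n + 1)
    (V : Submodule ℝ E) (hV : Module.finrank ℝ V = n) {a b : ℝ} (ha : 0 < a) :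
    volume {x : E |
        ‖V.orthogonalProjectionOnto x‖ < a ∧ ‖Vᗮ.orthogonalProjectionOnto x‖ < b} =
      ENNReal.ofReal (a ^ n * unitBallVol n * (2 * b)) := by
  have hperp : Module.finrank ℝ Vᗮ = Module.finrank ℝ ℝ := by
    have := V.finrank_add_finrank_orthogonal
    rw [Module.finrank_self]
    omega
  rw [volume_norm_projection_lt,
    volume_ball_eq_of_finrank_eq (E := V) (F := EuclideanSpace ℝ (Fin n)) (by simpa using hV),
    volume_ball_eq_of_finrank_eq hperp, Measure.addHaar_ball_of_pos _ _ ha,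
    ← ofReal_unitBallVol, finrank_euclideanSpace_fin, Real.volume_ball,
    ENNReal.ofReal_mul (mul_nonneg (pow_nonneg ha.le _) (unitBallVol_pos n).le),
    ENNReal.ofReal_mul (pow_nonneg ha.le _)]

/-- A radius whose dual lattice vectors span a nontrivial space is positive. -/
lemma pos_of_span_Theta0_eq_top (hd : 0 < d) {B : Basis (Fin d) ℝ (EuclideanSpace ℝ (Fin d))}
    {r : ℝ} (hr : Submodule.span ℝ (Theta0 B r) = ⊤) : 0 < r := by
  by_contra! hneg
  have : Nonempty (Fin d) := ⟨⟨0, hd⟩⟩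
  have hbot : Submodule.span ℝ (Theta0 B r) = ⊥ := by
    rw [Submodule.span_eq_bot]
    exact fun θ hθ => norm_le_zero_iff.mp (hθ.2.trans hneg)
  exact bot_ne_top (hbot.symm.trans hr)

/-- A lattice vector whose projection onto a lattice `r`-subspace is shorter than `2π / r` is
orthogonal to that subspace. -/
lemma mem_orthogonal_of_norm_projection_lt {B : Basis (Fin d) ℝ (EuclideanSpace ℝ (Fin d))}
    {r : ℝ} (hr : 0 < r) {V : Submodule ℝ (EuclideanSpace ℝ (Fin d))}
    (hV : IsLatticeSubspace B r V) {g : EuclideanSpace ℝ (Fin d)} (hg : g ∈ latticeOf B)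
    (hlt : ‖V.orthogonalProjectionOnto g‖ < 2 * Real.pi / r) : g ∈ Vᗮ := by
  obtain ⟨S, hS, rfl⟩ := hV
  set V := Submodule.span ℝ S
  rw [Submodule.mem_orthogonal]
  intro v hv
  induction hv using Submodule.span_induction with
  | mem θ hθ =>
    obtain ⟨hdual, hnorm⟩ := hS hθ
    obtain ⟨k, hk⟩ := hdual g hg
    have hproj : ⟪θ, g⟫ = ⟪(⟨θ, Submodule.subset_span hθ⟩ : V), V.orthogonalProjectionOnto g⟫ :=
      (V.inner_orthogonalProjectionOnto_eq_of_mem_left ⟨θ, Submodule.subset_span hθ⟩ g).symm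
    have habs : |⟪θ, g⟫| < 2 * Real.pi :=
      calc |⟪θ, g⟫| ≤ ‖θ‖ * ‖V.orthogonalProjectionOnto g‖ := by
            rw [hproj]
            exact abs_real_inner_le_norm _ _
        _ ≤ r * ‖V.orthogonalProjectionOnto g‖ := by gcongr
        _ < r * (2 * Real.pi / r) := by gcongr
        _ = 2 * Real.pi := by field_simp
    rw [hk, abs_mul, abs_of_pos Real.two_pi_pos] at habs
    have hlt_one : |(k : ℝ)| < 1 := by
      nlinarith [Real.two_pi_pos]
    have hk0 : k = 0 := Int.abs_lt_one_iff.mp (by exact_mod_cast hlt_one)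
    simp [hk, hk0]
  | zero => simp
  | add x y _ _ hx hy => rw [inner_add_left, hx, hy, add_zero]
  | smul c x _ hx => rw [real_inner_smul_left, hx, mul_zero]

/-- Lemma 4.1(1): for any (d−1)-dimensional lattice r-subspace V there is a
nonzero lattice vector g ∈ Γ with g_V = 0 and |g| ≤ 2 d(Γ) ω_{d−1}⁻¹ π^{1−d} r^{d−1}. -/
theorem exists_lattice_vector_orthogonal_to_lattice_subspace
    (d : ℕ) (hd : 2 ≤ d) (B : Basis (Fin d) ℝ (EuclideanSpace ℝ (Fin d))) (r : ℝ)
    (hr : Submodule.span ℝ (Theta0 B r) = ⊤)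
    (V : Submodule ℝ (EuclideanSpace ℝ (Fin d)))
    (hV : IsLatticeSubspace B r V) (hdim : Module.finrank ℝ V = d - 1) :
    ∃ g : EuclideanSpace ℝ (Fin d), g ∈ latticeOf B ∧ g ≠ 0 ∧ projV V g = 0 ∧
      ‖g‖ ≤ 2 * latDet B * (unitBallVol (d - 1))⁻¹ * Real.pi ^ ((1 : ℤ) - (d : ℤ)) *
        r ^ (d - 1) := by
  obtain ⟨n, rfl⟩ : ∃ n, d = n + 1 := ⟨d - 1, by omega⟩
  simp only [Nat.add_sub_cancel] at hdim ⊢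
  have hrpos : 0 < r := pos_of_span_Theta0_eq_top n.succ_pos hr
  have hω := unitBallVol_pos n
  have hdet := latDet_pos B
  set R := 2 * latDet B * (unitBallVol n)⁻¹ * Real.pi ^ ((1 : ℤ) - ((n + 1 : ℕ) : ℤ)) * r ^ n
    with hR
  have hpow : Real.pi ^ ((1 : ℤ) - ((n + 1 : ℕ) : ℤ)) = (Real.pi ^ n)⁻¹ := by
    rw [← zpow_natCast, ← zpow_neg]
    congr 1
    push_cast
    ring
  have ha : 0 < 2 * Real.pi / r := div_pos Real.two_pi_pos hrpos
  set s := {x : EuclideanSpace ℝ (Fin (n + 1)) |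
    ‖V.orthogonalProjectionOnto x‖ < 2 * Real.pi / r ∧ ‖Vᗮ.orthogonalProjectionOnto x‖ < R}
  have hs_symm : ∀ x ∈ s, -x ∈ s := fun x hx => by
    simpa only [s, Set.mem_ofPred_eq, map_neg, norm_neg] using hx
  have hs_conv : Convex ℝ s := by
    have hs : s = V.orthogonalProjectionOnto ⁻¹' Metric.ball 0 (2 * Real.pi / r) ∩
        Vᗮ.orthogonalProjectionOnto ⁻¹' Metric.ball 0 R := by
      ext x
      simp [s]
    rw [hs]
    exact ((convex_ball _ _).linear_preimage V.orthogonalProjectionOnto.toLinearMap).inter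
      ((convex_ball _ _).linear_preimage Vᗮ.orthogonalProjectionOnto.toLinearMap)
  have hvol : volume (ZSpan.fundamentalDomain B) *
      2 ^ Module.finrank ℝ (EuclideanSpace ℝ (Fin (n + 1))) < volume s := by
    have hvalue : (2 * Real.pi / r) ^ n * unitBallVol n * (2 * R) =
        2 * (latDet B * 2 ^ (n + 1)) := by
      rw [hR, hpow, div_pow, mul_pow]
      field_simp
      ring
    have htwo : (2 : ENNReal) ^ (n + 1) = ENNReal.ofReal (2 ^ (n + 1)) := by
      rw [ENNReal.ofReal_pow zero_le_two, ENNReal.ofReal_ofNat]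
    rw [volume_norm_projection_lt_of_finrank_eq (by simp) V hdim ha, hvalue,
      volume_fundamentalDomain_eq_latDet, finrank_euclideanSpace_fin, htwo,
      ← ENNReal.ofReal_mul hdet.le]
    have : 0 < latDet B * 2 ^ (n + 1) := by positivity
    exact (ENNReal.ofReal_lt_ofReal_iff (by linarith)).mpr (by linarith)
  have : Countable (latticeOf B).toAddSubgroup :=
    inferInstanceAs (Countable (Submodule.span ℤ (Set.range B)))
  obtain ⟨⟨g, hg⟩, hg0, hgs⟩ := exists_ne_zero_mem_lattice_of_measure_mul_two_pow_lt_measure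
    (L := (latticeOf B).toAddSubgroup) (ZSpan.isAddFundamentalDomain' B volume)
    hs_symm hs_conv hvol
  have hperp : g ∈ Vᗮ := mem_orthogonal_of_norm_projection_lt hrpos hV hg hgs.1
  refine ⟨g, hg, fun h => hg0 (Subtype.ext h), ?_, ?_⟩
  · exact congrArg Subtype.val
      (Submodule.orthogonalProjectionOnto_apply_of_mem_orthogonal hperp)
  · have hnorm : ‖Vᗮ.orthogonalProjectionOnto g‖ = ‖g‖ := by
      have := Submodule.orthogonalProjectionOnto_mem_subspace_eq_self (⟨g, hperp⟩ : Vᗮ)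
      rw [this]
      rfl
    exact hnorm ▸ hgs.2.le
end
end

section
/- Let W ∈ 𝒱(r,n) with n ≤ d−1 be a lattice r-subspace and let ν ∈ Γ† with ν ∉ W. Then dist(ν, W) ≥ d(Γ)^{−1} ω_{d−1} π^d r^{1−d}. -/
noncomputable section

open Set Submodule Module MeasureTheory Relation
open scoped RealInnerProductSpace

variable {d : ℕ}

/-- Hadamard's inequality for the determinant in the standard basis. -/
lemma abs_det_basisFun_le_prod_norm (v : Fin d → EuclideanSpace ℝ (Fin d)) :
    |(EuclideanSpace.basisFun (Fin d) ℝ).toBasis.det v| ≤ ∏ i, ‖v i‖ := by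
  have : Fact (finrank ℝ (EuclideanSpace ℝ (Fin d)) = d) := ⟨by simp⟩
  have h := (EuclideanSpace.basisFun (Fin d) ℝ).toBasis.orientation.abs_volumeForm_apply_le v
  rwa [Orientation.volumeForm_robust' _ (EuclideanSpace.basisFun (Fin d) ℝ)] at h

/-- The Euclidean unit ball lies in the cube `(-1, 1)^n`. -/
lemma unitBallVol_le (n : ℕ) : unitBallVol n ≤ 2 ^ n := by
  have hsub : Metric.ball (0 : EuclideanSpace ℝ (Fin n)) 1 ⊆
      WithLp.ofLp ⁻¹' Metric.ball (0 : Fin n → ℝ) 1 := by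
    intro x hx
    rw [mem_ball_zero_iff] at hx
    rw [mem_preimage, mem_ball_zero_iff, pi_norm_lt_iff one_pos]
    exact fun i => (PiLp.norm_apply_le x i).trans_lt hx
  have hvol := measure_mono (μ := volume) hsub
  rw [(PiLp.volume_preserving_ofLp (Fin n)).measure_preimage
    measurableSet_ball.nullMeasurableSet, Real.volume_pi_ball _ one_pos] at hvol
  have := ENNReal.toReal_mono ENNReal.ofReal_ne_top hvol
  rw [ENNReal.toReal_ofReal (by positivity)] at this
  simpa [unitBallVol] using this

/-- Linearly independent dual lattice vectors span a parallelepiped of volume at least that of a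
fundamental domain of the dual lattice. -/
lemma two_pi_pow_le_abs_det_mul_latDet (B : Basis (Fin d) ℝ (EuclideanSpace ℝ (Fin d)))
    (v : Fin d → EuclideanSpace ℝ (Fin d)) (hv : ∀ i, v i ∈ dualLattice B)
    (hli : LinearIndependent ℝ v) :
    (2 * Real.pi) ^ d ≤ |(EuclideanSpace.basisFun (Fin d) ℝ).toBasis.det v| * latDet B := by
  set e := (EuclideanSpace.basisFun (Fin d) ℝ).toBasis with he
  choose k hk using fun i j => hv i (B j) (Submodule.subset_span (mem_range_self j))
  have hmat : (e.toMatrix v).transpose * e.toMatrix (fun i => B i) =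
      (2 * Real.pi) • (Matrix.of k).map (Int.castRingHom ℝ) := by
    ext i j
    have := hk i j
    rw [PiLp.inner_apply] at this
    simp only [Matrix.mul_apply, Matrix.transpose_apply, Basis.toMatrix_apply, he,
      OrthonormalBasis.coe_toBasis_repr_apply, EuclideanSpace.basisFun_repr, Matrix.smul_apply,
      Matrix.map_apply, Matrix.of_apply, smul_eq_mul, eq_intCast]
    rw [← this]
    exact Finset.sum_congr rfl fun l _ => by simp [mul_comm]
  have hdet : e.det v * e.det (fun i => B i) = (2 * Real.pi) ^ d * ((Matrix.of k).det : ℝ) := by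
    have h := congrArg Matrix.det hmat
    rw [Matrix.det_mul, Matrix.det_transpose, Matrix.det_smul, Fintype.card_fin,
      ← RingHom.mapMatrix_apply, ← RingHom.map_det] at h
    simpa [Basis.det_apply] using h
  have hv0 : e.det v ≠ 0 := by
    simpa using (e.isUnit_det (basisOfLinearIndependentOfCardEqFinrank' v hli (by simp))).ne_zero
  have hB0 : e.det (fun i => B i) ≠ 0 := (e.isUnit_det B).ne_zero
  have hk0 : (Matrix.of k).det ≠ 0 := by
    intro h
    rw [h, Int.cast_zero, mul_zero] at hdet
    exact mul_ne_zero hv0 hB0 hdet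
  have hk1 : (1 : ℝ) ≤ |((Matrix.of k).det : ℝ)| := by
    exact_mod_cast Int.one_le_abs hk0
  rw [latDet, ← abs_mul, hdet, abs_mul, abs_of_nonneg (by positivity : 0 ≤ (2 * Real.pi) ^ d)]
  exact le_mul_of_one_le_right (by positivity) hk1

/-- An alternating map does not change when an argument is modified by an element of the span of
the other arguments. -/
lemma AlternatingMap.map_update_sub_of_mem_span {ι M : Type*} [DecidableEq ι] [AddCommGroup M]
    [Module ℝ M] (f : M [⋀^ι]→ₗ[ℝ] ℝ) (v : ι → M) (i : ι) {w : M}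
    (hw : w ∈ Submodule.span ℝ (v '' {i}ᶜ)) :
    f (Function.update v i (v i - w)) = f v := by
  have hzero : f (Function.update v i w) = 0 := by
    refine f.map_linearDependent _ fun hli => ?_
    refine hli.notMem_span_image (s := {i}ᶜ) (x := i) (by simp) ?_
    have himage : Function.update v i w '' {i}ᶜ = v '' {i}ᶜ :=
      image_congr fun j hj => Function.update_of_ne hj w v
    rwa [Function.update_self, himage]
  rw [f.map_update_sub, hzero, Function.update_eq_self, sub_zero]

/-- A lattice subspace and a dual lattice vector outside it fit into a basis of dual lattice
vectors whose other members are short. -/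
lemma IsLatticeSubspace.exists_linearIndependent {B : Basis (Fin d) ℝ (EuclideanSpace ℝ (Fin d))}
    {r : ℝ} {W : Submodule ℝ (EuclideanSpace ℝ (Fin d))} (hW : IsLatticeSubspace B r W)
    (hr : Submodule.span ℝ (Theta0 B r) = ⊤) {ν : EuclideanSpace ℝ (Fin d)} (hνW : ν ∉ W) :
    ∃ (v : Fin d → EuclideanSpace ℝ (Fin d)) (i : Fin d), LinearIndependent ℝ v ∧ v i = ν ∧
      (∀ j ≠ i, v j ∈ Theta0 B r) ∧ W ≤ Submodule.span ℝ (v '' {i}ᶜ) := by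
  obtain ⟨S, hS, rfl⟩ := hW
  obtain ⟨b, hbS, hbspan, hbli⟩ := _root_.exists_linearIndependent ℝ S
  rw [← hbspan] at hνW
  have hins : LinearIndepOn ℝ id (insert ν b) := LinearIndepOn.id_insert hbli hνW
  obtain ⟨T, hT, hbT, hspan, hli⟩ := exists_linearIndepOn_id_extension hins
    (insert_subset_insert (hbS.trans hS) : insert ν b ⊆ insert ν (Theta0 B r))
  have htop : ⊤ ≤ Submodule.span ℝ (range ((↑) : T → EuclideanSpace ℝ (Fin d))) := by
    rw [Subtype.range_coe, ← hr, Submodule.span_le]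
    exact (subset_insert _ _).trans hspan
  let bT : Basis T ℝ (EuclideanSpace ℝ (Fin d)) := Basis.mk hli htop
  have : Fintype T := FiniteDimensional.fintypeBasisIndex bT
  have hcard : Fintype.card T = d := by
    rw [← finrank_eq_card_basis bT, finrank_euclideanSpace_fin]
  let E : Fin d ≃ T := (Fintype.equivFinOfCardEq hcard).symm
  have hνT : ν ∈ T := hbT (mem_insert _ _)
  refine ⟨fun i => E i, E.symm ⟨ν, hνT⟩, hli.linearIndependent.comp E E.injective, by simp, ?_, ?_⟩
  · intro j hj
    refine (hT (E j).2).resolve_left fun h => hj ?_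
    rw [Equiv.eq_symm_apply]
    exact Subtype.ext h
  · rw [← hbspan]
    refine Submodule.span_mono fun x hx => ?_
    refine ⟨E.symm ⟨x, hbT (mem_insert_of_mem _ hx)⟩, ?_, by simp⟩
    rw [mem_compl_singleton_iff, Ne, EmbeddingLike.apply_eq_iff_eq, Subtype.mk.injEq]
    rintro rfl
    exact hνW (Submodule.subset_span hx)

/-- Lemma 4.1(2): for any lattice r-subspace W of dimension n ≤ d−1 and any
dual lattice vector ν ∉ W, dist(ν, W) ≥ d(Γ)⁻¹ ω_{d−1} π^d r^{1−d}. -/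
theorem dist_dualLattice_latticeSubspace_lower_bound
    (d n : ℕ) (hd : 2 ≤ d) (hn : n ≤ d - 1)
    (B : Basis (Fin d) ℝ (EuclideanSpace ℝ (Fin d))) (r : ℝ)
    (hr : Submodule.span ℝ (Theta0 B r) = ⊤)
    (W : Submodule ℝ (EuclideanSpace ℝ (Fin d)))
    (hW : IsLatticeSubspace B r W) (hdim : Module.finrank ℝ W = n)
    (ν : EuclideanSpace ℝ (Fin d)) (hν : ν ∈ dualLattice B) (hνW : ν ∉ W) :
    (latDet B)⁻¹ * unitBallVol (d - 1) * Real.pi ^ d * r ^ ((1 : ℤ) - (d : ℤ)) ≤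
      Metric.infDist ν (W : Set (EuclideanSpace ℝ (Fin d))) := by
  obtain ⟨v, i, hli, hvi, hvT, hWspan⟩ := hW.exists_linearIndependent hr hνW
  have hv : ∀ j, v j ∈ dualLattice B := fun j => by
    by_cases hj : j = i
    · rwa [hj, hvi]
    · exact (hvT j hj).1
  have hr0 : 0 < r := by
    have : Nontrivial (Fin d) := Fin.nontrivial_iff_two_le.2 hd
    obtain ⟨j, hj⟩ := exists_ne i
    exact (norm_pos_iff.2 (hli.ne_zero j)).trans_le (hvT j hj).2
  have hdet0 : 0 < latDet B :=
    abs_pos.2 ((EuclideanSpace.basisFun (Fin d) ℝ).toBasis.isUnit_det B).ne_zero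
  refine (Metric.le_infDist ⟨0, W.zero_mem⟩).2 fun w hw => ?_
  have hdet : |(EuclideanSpace.basisFun (Fin d) ℝ).toBasis.det v| ≤
      dist ν w * r ^ (d - 1) := by
    rw [← AlternatingMap.map_update_sub_of_mem_span _ v i (hWspan hw)]
    refine (abs_det_basisFun_le_prod_norm _).trans ?_
    rw [← Finset.mul_prod_erase _ _ (Finset.mem_univ i), Function.update_self, hvi, dist_eq_norm]
    refine mul_le_mul_of_nonneg_left ?_ (norm_nonneg _)
    refine (Finset.prod_le_prod (g := fun _ => r) (fun _ _ => norm_nonneg _)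
      fun j hj => ?_).trans_eq (by simp)
    rw [Function.update_of_ne (Finset.ne_of_mem_erase hj)]
    exact (hvT j (Finset.ne_of_mem_erase hj)).2
  have hball : unitBallVol (d - 1) ≤ 2 ^ d :=
    (unitBallVol_le _).trans (pow_le_pow_right₀ one_le_two (Nat.sub_le _ _))
  have hzpow : r ^ ((1 : ℤ) - (d : ℤ)) = (r ^ (d - 1))⁻¹ := by
    rw [← zpow_natCast, ← zpow_neg, Nat.cast_sub (by lia)]
    simp
  have hmain : unitBallVol (d - 1) * Real.pi ^ d ≤ dist ν w * r ^ (d - 1) * latDet B :=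
    calc unitBallVol (d - 1) * Real.pi ^ d ≤ 2 ^ d * Real.pi ^ d := by gcongr
      _ = (2 * Real.pi) ^ d := (mul_pow _ _ _).symm
      _ ≤ _ := two_pi_pow_le_abs_det_mul_latDet B v hv hli
      _ ≤ _ := by gcongr
  rw [hzpow, mul_assoc (latDet B)⁻¹, ← div_eq_mul_inv, div_le_iff₀ (by positivity),
    inv_mul_le_iff₀ hdet0]
  linarith
end
end

section
/- There is a constant C > 0, depending only on d and Γ, such that the following holds. Let θ₁, …, θ_m ∈ Θ_r⁰ and suppose η is θ₁,…,θ_m-resonant congruent to ξ, i.e. there is a chain ξ = ξ₀, ξ₁, …, ξ_m = η with ξ_j ∈ Υ_{θ_j}(ξ_{j−1}) for each j. If V = span(θ₁, …, θ_m) has dimension n, then |ξ_V| ≤ C ρ^{α₁} r^{(n−1)d}. -/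
noncomputable section

open Set Submodule Module MeasureTheory Relation
open scoped RealInnerProductSpace

variable {d : ℕ}

/-- The coordinates of a vector in the basis of Γ† dual to `B`. -/
def dualCoords (B : Basis (Fin d) ℝ (EuclideanSpace ℝ (Fin d))) :
    EuclideanSpace ℝ (Fin d) →ₗ[ℝ] (Fin d → ℝ) :=
  LinearMap.pi fun j => (2 * Real.pi)⁻¹ • innerₗ (EuclideanSpace ℝ (Fin d)) (B j)

theorem dualCoords_apply (B : Basis (Fin d) ℝ (EuclideanSpace ℝ (Fin d)))
    (z : EuclideanSpace ℝ (Fin d)) (j : Fin d) :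
    dualCoords B z j = (2 * Real.pi)⁻¹ * ⟪z, B j⟫ := by
  simp [dualCoords, real_inner_comm]

theorem ker_dualCoords (B : Basis (Fin d) ℝ (EuclideanSpace ℝ (Fin d))) :
    LinearMap.ker (dualCoords B) = ⊥ := by
  refine LinearMap.ker_eq_bot'.2 fun z hz => ?_
  refine InnerProductSpace.ext_inner_right_basis B fun j => ?_
  have h := congrFun hz j
  rw [dualCoords_apply] at h
  simpa [Real.pi_ne_zero] using h

/-- The determinant of `d` vectors in the coordinates `dualCoords B`. -/
def dualDet (B : Basis (Fin d) ℝ (EuclideanSpace ℝ (Fin d))) :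
    EuclideanSpace ℝ (Fin d) [⋀^Fin d]→ₗ[ℝ] ℝ :=
  Matrix.detRowAlternating.compLinearMap (dualCoords B)

theorem dualDet_apply (B : Basis (Fin d) ℝ (EuclideanSpace ℝ (Fin d)))
    (v : Fin d → EuclideanSpace ℝ (Fin d)) :
    dualDet B v = Matrix.det (Matrix.of fun i => dualCoords B (v i)) := rfl

theorem one_le_abs_dualDet (B : Basis (Fin d) ℝ (EuclideanSpace ℝ (Fin d)))
    {v : Fin d → EuclideanSpace ℝ (Fin d)} (hv : LinearIndependent ℝ v)
    (hmem : ∀ i, v i ∈ dualLattice B) : 1 ≤ |dualDet B v| := by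
  have hint : ∀ i j, ∃ k : ℤ, dualCoords B (v i) j = k := fun i j => by
    obtain ⟨k, hk⟩ := hmem i (B j) (Submodule.subset_span (Set.mem_range_self j))
    refine ⟨k, ?_⟩
    rw [dualCoords_apply, hk]
    field_simp
  choose A hA using hint
  have hdet : dualDet B v = ((Matrix.of A).det : ℤ) := by
    rw [dualDet_apply, Int.cast_det]
    congr 1
    ext i j
    simp [hA]
  have hne : dualDet B v ≠ 0 := by
    have hli : LinearIndependent ℝ (Matrix.of fun i => dualCoords B (v i)).row :=
      hv.map' _ (ker_dualCoords B)
    have hu := Matrix.linearIndependent_rows_iff_isUnit.1 hli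
    exact ((Matrix.isUnit_iff_isUnit_det _).1 hu).ne_zero
  rw [hdet] at hne ⊢
  exact_mod_cast Int.one_le_abs (by exact_mod_cast hne)

theorem exists_abs_dualDet_le (B : Basis (Fin d) ℝ (EuclideanSpace ℝ (Fin d))) :
    ∃ K : ℝ, 1 ≤ K ∧ ∀ v : Fin d → EuclideanSpace ℝ (Fin d),
      |dualDet B v| ≤ K * ∏ i, ‖v i‖ := by
  set c : ℝ := ∑ j, (2 * Real.pi)⁻¹ * ‖B j‖ with hc
  have hc0 : ∀ j ∈ Finset.univ, 0 ≤ (2 * Real.pi)⁻¹ * ‖B j‖ := fun j _ => by positivity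
  have hent : ∀ z j, |dualCoords B z j| ≤ c * ‖z‖ := fun z j => by
    have h1 : (2 * Real.pi)⁻¹ * ‖B j‖ ≤ c := Finset.single_le_sum hc0 (Finset.mem_univ j)
    rw [dualCoords_apply, abs_mul, abs_of_pos (by positivity : 0 < (2 * Real.pi)⁻¹)]
    calc (2 * Real.pi)⁻¹ * |⟪z, B j⟫| ≤ (2 * Real.pi)⁻¹ * (‖z‖ * ‖B j‖) := by
          gcongr
          exact abs_real_inner_le_norm _ _
      _ = ((2 * Real.pi)⁻¹ * ‖B j‖) * ‖z‖ := by ring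
      _ ≤ c * ‖z‖ := by gcongr
  refine ⟨max 1 (Fintype.card (Equiv.Perm (Fin d)) * c ^ d), le_max_left _ _, fun v => ?_⟩
  have hterm : ∀ σ : Equiv.Perm (Fin d),
      |Equiv.Perm.sign σ • ∏ i, (Matrix.of fun i => dualCoords B (v i)) (σ i) i| ≤
        c ^ d * ∏ i, ‖v i‖ := fun σ => by
    have hsign : ∀ y : ℝ, |Equiv.Perm.sign σ • y| = |y| := fun y => by
      rcases Int.units_eq_one_or (Equiv.Perm.sign σ) with h | h <;> simp [h]
    rw [hsign, Finset.abs_prod, ← Equiv.prod_comp σ (fun i => ‖v i‖)]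
    calc ∏ i, |(Matrix.of fun i => dualCoords B (v i)) (σ i) i|
        ≤ ∏ i, c * ‖v (σ i)‖ :=
          Finset.prod_le_prod (fun _ _ => abs_nonneg _) fun i _ => hent _ _
      _ = c ^ d * ∏ i, ‖v (σ i)‖ := by simp [Finset.prod_mul_distrib]
  calc |dualDet B v| ≤ ∑ _σ : Equiv.Perm (Fin d), c ^ d * ∏ i, ‖v i‖ := by
        rw [dualDet_apply, Matrix.det_apply]
        exact (Finset.abs_sum_le_sum_abs _ _).trans (Finset.sum_le_sum fun σ _ => hterm σ)
    _ = Fintype.card (Equiv.Perm (Fin d)) * c ^ d * ∏ i, ‖v i‖ := by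
        rw [Finset.sum_const, Finset.card_univ, nsmul_eq_mul, mul_assoc]
    _ ≤ _ := by
        gcongr
        exact le_max_right _ _

theorem AlternatingMap.map_update_eq_zero_of_mem_span {E : Type*} [AddCommGroup E] [Module ℝ E]
    {ι : Type*} [DecidableEq ι] (f : E [⋀^ι]→ₗ[ℝ] ℝ) (v : ι → E) (i : ι) {w : E}
    (hw : w ∈ Submodule.span ℝ (v '' {i}ᶜ)) : f (Function.update v i w) = 0 := by
  induction hw using Submodule.span_induction with
  | mem y hy =>
    obtain ⟨j, hj, rfl⟩ := hy
    exact f.map_update_self v (Ne.symm hj)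
  | zero => exact f.map_coord_zero i (Function.update_self ..)
  | add y z _ _ hy hz => rw [f.map_update_add, hy, hz, add_zero]
  | smul c y _ hy => rw [f.map_update_smul, hy, smul_zero]

/-- A vector of Θ_r⁰ outside a lattice r-subspace is at distance at least of order `r ^ (1 - d)`
from it. -/
theorem exists_one_le_mul_norm_sub (B : Basis (Fin d) ℝ (EuclideanSpace ℝ (Fin d))) :
    ∃ K : ℝ, 1 ≤ K ∧ ∀ r : ℝ, Submodule.span ℝ (Theta0 B r) = ⊤ →
      ∀ S ⊆ Theta0 B r, ∀ θ ∈ Theta0 B r, θ ∉ Submodule.span ℝ S →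
        ∀ w ∈ Submodule.span ℝ S, 1 ≤ K * r ^ (d - 1) * ‖θ - w‖ := by
  obtain ⟨K, hK1, hK⟩ := exists_abs_dualDet_le B
  refine ⟨K, hK1, fun r hspan S hS θ hθ hθS w hw => ?_⟩
  obtain ⟨s, hsS, hsspan, hs⟩ := exists_linearIndependent ℝ S
  rw [← hsspan] at hθS hw
  have hins : LinearIndepOn ℝ id (insert θ s) := LinearIndepOn.id_insert hs hθS
  have hsub : insert θ s ⊆ Theta0 B r := Set.insert_subset hθ (hsS.trans hS)
  let b := Basis.extendLe hins hsub hspan.ge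
  let v := b.reindex (b.indexEquiv B)
  have hrange : Set.range v = Set.range b := b.range_reindex _
  have hvmem : ∀ i, v i ∈ Theta0 B r := fun i =>
    Basis.extendLe_subset hins hsub hspan.ge (hrange ▸ Set.mem_range_self i)
  have hsv : insert θ s ⊆ Set.range v := hrange ▸ Basis.subset_extendLe hins hsub hspan.ge
  obtain ⟨i, hi⟩ := hsv (Set.mem_insert θ s)
  have hsi : s ⊆ v '' {i}ᶜ := fun y hy => by
    obtain ⟨j, rfl⟩ := hsv (Set.mem_insert_of_mem θ hy)
    refine ⟨j, fun hj => hθS ?_, rfl⟩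
    rw [← hi, ← Set.mem_singleton_iff.1 hj]
    exact Submodule.subset_span hy
  have hdet : dualDet B (Function.update v i (θ - w)) = dualDet B v := by
    rw [AlternatingMap.map_update_sub, AlternatingMap.map_update_eq_zero_of_mem_span _ _ _
      (Submodule.span_mono hsi hw), sub_zero, ← hi, Function.update_eq_self]
  calc (1 : ℝ) ≤ |dualDet B v| :=
        one_le_abs_dualDet B v.linearIndependent fun i => (hvmem i).1
    _ ≤ K * ∏ j, ‖Function.update v i (θ - w) j‖ := hdet ▸ hK _
    _ = K * ((∏ j ∈ Finset.univ.erase i, ‖v j‖) * ‖θ - w‖) := by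
        rw [← Finset.prod_erase_mul _ _ (Finset.mem_univ i), Function.update_self]
        congr 2
        refine Finset.prod_congr rfl fun j hj => ?_
        rw [Function.update_of_ne (Finset.ne_of_mem_erase hj)]
    _ ≤ K * (r ^ (d - 1) * ‖θ - w‖) := by
        gcongr
        refine (Finset.prod_le_prod (fun _ _ => norm_nonneg _) fun j _ => (hvmem j).2).trans ?_
        simp [Finset.card_erase_of_mem]
    _ = K * r ^ (d - 1) * ‖θ - w‖ := by ring

theorem norm_projV_le_iff {V : Submodule ℝ (EuclideanSpace ℝ (Fin d))}
    {ξ : EuclideanSpace ℝ (Fin d)} {M : ℝ} (hM : 0 ≤ M) :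
    ‖projV V ξ‖ ≤ M ↔ ∀ v ∈ V, |⟪ξ, v⟫| ≤ M * ‖v‖ := by
  have hinner : ∀ v ∈ V, ⟪ξ, v⟫ = ⟪projV V ξ, v⟫ := fun v hv => by
    have h : ⟪ξ - projV V ξ, v⟫ = 0 := V.starProjection_inner_eq_zero ξ v hv
    rwa [inner_sub_left, sub_eq_zero] at h
  constructor
  · intro h v hv
    rw [hinner v hv]
    exact (abs_real_inner_le_norm _ _).trans (by gcongr)
  · intro h
    have hmem : projV V ξ ∈ V := Submodule.coe_mem _
    have h1 := h _ hmem
    rw [hinner _ hmem, real_inner_self_eq_norm_sq, abs_of_nonneg (by positivity)] at h1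
    rcases (norm_nonneg (projV V ξ)).eq_or_lt with h0 | h0
    · rwa [← h0]
    · nlinarith

/-- Adjoining one vector `θ` to a subspace `W`: if `ξ - η ∈ W` and `η` lies in the resonant layer
of `θ`, the projection of `ξ` onto the enlarged subspace is controlled. -/
theorem norm_projV_sup_span_singleton_le {W : Submodule ℝ (EuclideanSpace ℝ (Fin d))}
    {ξ η θ : EuclideanSpace ℝ (Fin d)} {M R L : ℝ} (hM : 0 ≤ M) (hR : 0 ≤ R) (hL : 0 ≤ L)
    (hξ : ‖projV W ξ‖ ≤ M) (hη : ‖projV W η‖ ≤ M) (hsub : ξ - η ∈ W)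
    (hlayer : |⟪η, θ⟫| ≤ R * ‖θ‖) (hθ : ‖θ‖ ≤ L * ‖θ - projV W θ‖) :
    ‖projV (W ⊔ Submodule.span ℝ {θ}) ξ‖ ≤ M + (R + M) * L := by
  rw [norm_projV_le_iff hM] at hξ hη
  rw [norm_projV_le_iff (by positivity)]
  intro v hv
  obtain ⟨w, hw, y, hy, rfl⟩ := Submodule.mem_sup.1 hv
  obtain ⟨t, rfl⟩ := Submodule.mem_span_singleton.1 hy
  have hpmem : projV W θ ∈ W := Submodule.coe_mem _
  have horth : ∀ z ∈ W, ⟪θ - projV W θ, z⟫ = 0 := W.starProjection_inner_eq_zero θ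
  have hpnorm : ‖projV W θ‖ ≤ ‖θ‖ := W.norm_starProjection_apply_le θ
  set p := projV W θ
  set u := θ - p with hu
  have hw' : w + t • p ∈ W := W.add_mem hw (W.smul_mem t hpmem)
  have hdecomp : w + t • θ = (w + t • p) + t • u := by
    rw [hu, smul_sub]
    abel
  rw [hdecomp]
  set w' := w + t • p
  have hpyth : ‖w' + t • u‖ ^ 2 = ‖w'‖ ^ 2 + ‖t • u‖ ^ 2 := by
    have h0 : ⟪w', t • u⟫ = 0 := by
      rw [inner_smul_right, real_inner_comm, horth _ hw', mul_zero]
    rw [norm_add_sq_real, h0]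
    ring
  have hle1 : ‖w'‖ ≤ ‖w' + t • u‖ :=
    le_of_pow_le_pow_left₀ two_ne_zero (norm_nonneg _)
      (hpyth ▸ le_add_of_nonneg_right (sq_nonneg _))
  have hle2 : ‖t • u‖ ≤ ‖w' + t • u‖ :=
    le_of_pow_le_pow_left₀ two_ne_zero (norm_nonneg _)
      (hpyth ▸ le_add_of_nonneg_left (sq_nonneg _))
  have hξu : ⟪ξ, u⟫ = ⟪η, θ⟫ - ⟪η, p⟫ := by
    have h0 := horth _ hsub
    rw [real_inner_comm, inner_sub_left] at h0
    rw [← inner_sub_right]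
    linarith
  have hξu_le : |⟪ξ, u⟫| ≤ (R + M) * L * ‖u‖ := by
    rw [hξu]
    calc |⟪η, θ⟫ - ⟪η, p⟫| ≤ |⟪η, θ⟫| + |⟪η, p⟫| := abs_sub _ _
      _ ≤ R * ‖θ‖ + M * ‖p‖ := add_le_add hlayer (hη p hpmem)
      _ ≤ R * ‖θ‖ + M * ‖θ‖ := by gcongr
      _ = (R + M) * ‖θ‖ := by ring
      _ ≤ (R + M) * (L * ‖u‖) := by gcongr
      _ = (R + M) * L * ‖u‖ := by ring
  calc |⟪ξ, w' + t • u⟫| ≤ |⟪ξ, w'⟫| + |t| * |⟪ξ, u⟫| := by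
        rw [inner_add_right, inner_smul_right, ← abs_mul]
        exact abs_add_le _ _
    _ ≤ M * ‖w'‖ + |t| * ((R + M) * L * ‖u‖) := by
        gcongr
        exact hξ _ hw'
    _ = M * ‖w'‖ + (R + M) * L * ‖t • u‖ := by
        rw [norm_smul, Real.norm_eq_abs]
        ring
    _ ≤ M * ‖w' + t • u‖ + (R + M) * L * ‖w' + t • u‖ := by gcongr
    _ = (M + (R + M) * L) * ‖w' + t • u‖ := by ring

theorem upsTheta_symm {ρ a : ℝ} {θ ξ η : EuclideanSpace ℝ (Fin d)}
    (h : η ∈ upsTheta ρ a θ ξ) : ξ ∈ upsTheta ρ a θ η := by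
  obtain ⟨hξ, hη, l, hl⟩ := h
  refine ⟨hη, hξ, -l, ?_⟩
  rw [← neg_sub, hl]
  push_cast
  rw [neg_smul]

theorem abs_inner_le_of_mem_layer {ρ a : ℝ} {θ ξ : EuclideanSpace ℝ (Fin d)}
    (h : ξ ∈ layer ρ a θ) : |⟪ξ, θ⟫| ≤ ρ ^ a * ‖θ‖ := by
  rcases h with rfl | h
  · simp
  · exact h.le

theorem chain_sub_mem_span {ρ a : ℝ} {m : ℕ} (θ : Fin m → EuclideanSpace ℝ (Fin d))
    (x : Fin (m + 1) → EuclideanSpace ℝ (Fin d))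
    (hx : ∀ j : Fin m, x j.succ ∈ upsTheta ρ a (θ j) (x j.castSucc)) (i : Fin (m + 1)) :
    x 0 - x i ∈ Submodule.span ℝ (Set.range θ) := by
  induction i using Fin.induction with
  | zero => simp
  | succ j ih =>
    obtain ⟨-, -, l, hl⟩ := hx j
    rw [← sub_add_sub_cancel _ (x j.castSucc), hl]
    exact add_mem ih (Submodule.smul_mem _ _ (Submodule.subset_span (Set.mem_range_self j)))

/-- The bound on the projection of the start of a chain, for steps taken from a set `Θ` whose
vectors keep a distance at least `‖θ‖ / T` from the spans of its subsets avoiding them. -/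
theorem norm_projV_chain_le {ρ a T : ℝ} (hρ : 0 ≤ ρ) (hT : 1 ≤ T)
    {Θ : Set (EuclideanSpace ℝ (Fin d))}
    (hΘ : ∀ S ⊆ Θ, ∀ θ ∈ Θ, θ ∉ Submodule.span ℝ S →
      ∀ w ∈ Submodule.span ℝ S, ‖θ‖ ≤ T * ‖θ - w‖)
    (m : ℕ) (θ : Fin m → EuclideanSpace ℝ (Fin d)) (x : Fin (m + 1) → EuclideanSpace ℝ (Fin d))
    (hθ : ∀ j, θ j ∈ Θ) (hx : ∀ j : Fin m, x j.succ ∈ upsTheta ρ a (θ j) (x j.castSucc)) :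
    ‖projV (Submodule.span ℝ (Set.range θ)) (x 0)‖ ≤
      ρ ^ a * (3 * T) ^ (Module.finrank ℝ (Submodule.span ℝ (Set.range θ)) - 1) := by
  have hR : 0 ≤ ρ ^ a := Real.rpow_nonneg hρ a
  induction m with
  | zero =>
    have hbot : Submodule.span ℝ (Set.range θ) = ⊥ := by simp
    have h0 : projV (⊥ : Submodule ℝ (EuclideanSpace ℝ (Fin d))) (x 0) = 0 :=
      (Submodule.mem_bot ℝ).1 (Submodule.coe_mem _)
    rw [hbot, h0, norm_zero]
    positivity
  | succ m ih =>
    let θ' : Fin m → EuclideanSpace ℝ (Fin d) := fun j => θ j.castSucc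
    let x' : Fin (m + 1) → EuclideanSpace ℝ (Fin d) := fun j => x j.castSucc
    have hθ' : ∀ j, θ' j ∈ Θ := fun j => hθ _
    have hx' : ∀ j : Fin m, x' j.succ ∈ upsTheta ρ a (θ' j) (x' j.castSucc) := fun j =>
      hx j.castSucc
    have hfirst := ih θ' x' hθ' hx'
    have hlast := ih (θ' ∘ Fin.rev) (x' ∘ Fin.rev) (fun j => hθ' _) fun j => by
      have h := upsTheta_symm (hx' j.rev)
      simpa [Fin.rev_succ, Fin.rev_castSucc] using h
    rw [Fin.rev_surjective.range_comp] at hlast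
    have hx0 : x' 0 = x 0 := rfl
    have hxm : (x' ∘ Fin.rev) 0 = x (Fin.last m).castSucc := by simp [x']
    have hsub := chain_sub_mem_span θ' x' hx' (Fin.last m)
    have hlayer := abs_inner_le_of_mem_layer (hx (Fin.last m)).1
    have hspan : Submodule.span ℝ (Set.range θ) =
        Submodule.span ℝ (Set.range θ') ⊔ Submodule.span ℝ {θ (Fin.last m)} := by
      rw [← Submodule.span_union]
      congr 1
      ext y
      simp [θ', Fin.exists_fin_succ', eq_comm, or_comm]
    rw [hxm] at hlast
    rw [hx0] at hfirst hsub
    have hSΘ : Set.range θ' ⊆ Θ := Set.range_subset_iff.2 hθ'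
    have hθlast := hθ (Fin.last m)
    have hdist := hΘ _ hSΘ _ hθlast
    rw [hspan]
    set W := Submodule.span ℝ (Set.range θ')
    set τ := θ (Fin.last m)
    by_cases hτ : τ ∈ W
    · rw [sup_eq_left.2 ((Submodule.span_singleton_le_iff_mem _ _).2 hτ)]
      exact hfirst
    · have hfin : Module.finrank ℝ ↥(W ⊔ Submodule.span ℝ {τ}) = Module.finrank ℝ W + 1 :=
        Submodule.finrank_sup_span_singleton hτ
      rw [hfin, Nat.add_sub_cancel]
      rcases Nat.eq_zero_or_pos (Module.finrank ℝ W) with h0 | h0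
      · have hW : W = ⊥ := Submodule.finrank_eq_zero.1 h0
        have hproj : ∀ z, projV W z = 0 := fun z => by
          have hmem : projV W z ∈ W := Submodule.coe_mem _
          exact (Submodule.mem_bot ℝ).1 (hW.le hmem)
        have h := norm_projV_sup_span_singleton_le le_rfl hR zero_le_one
          (by rw [hproj, norm_zero]) (by rw [hproj, norm_zero]) hsub hlayer
          (by rw [hproj, sub_zero, one_mul])
        simpa [h0] using h
      · obtain ⟨k, hk⟩ := Nat.exists_eq_add_of_le' h0
        rw [hk, Nat.add_sub_cancel] at hfirst hlast
        rw [hk]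
        refine (norm_projV_sup_span_singleton_le (by positivity) hR (zero_le_one.trans hT)
          hfirst hlast hsub hlayer (hdist hτ _ (Submodule.coe_mem _))).trans ?_
        have hpow : 1 ≤ (3 * T) ^ k := one_le_pow₀ (by linarith)
        have hRle : ρ ^ a ≤ ρ ^ a * (3 * T) ^ k := le_mul_of_one_le_right hR hpow
        rw [pow_succ]
        nlinarith

/-- Lemma 5.6(i): there is C = C(d,Γ) > 0 such that, under the standing
parameter conditions, whenever η is θ₁,…,θ_m-resonant congruent to ξ via a chain
ξ = x₀, x₁, …, x_m = η with x_j ∈ Υ_{θ_j}(x_{j−1}), and V = span(θ₁,…,θ_m) has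
dimension n, one has |ξ_V| ≤ C ρ^{α₁} r^{(n−1)d}. -/
theorem proj_span_chain_le
    (d : ℕ) (hd : 2 ≤ d) (B : Basis (Fin d) ℝ (EuclideanSpace ℝ (Fin d))) :
    ∃ C : ℝ, 0 < C ∧ ∀ (ρ r κ : ℝ) (α : ℕ → ℝ), GoodParams B ρ r κ α →
      ∀ (m : ℕ) (θ : Fin m → EuclideanSpace ℝ (Fin d))
        (x : Fin (m + 1) → EuclideanSpace ℝ (Fin d)),
        (∀ j : Fin m, θ j ∈ Theta0 B r) →
        (∀ j : Fin m, x j.succ ∈ upsTheta ρ (α 1) (θ j) (x j.castSucc)) →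
      ∀ n : ℕ, Module.finrank ℝ (Submodule.span ℝ (Set.range θ)) = n →
        ‖projV (Submodule.span ℝ (Set.range θ)) (x 0)‖ ≤
          C * ρ ^ α 1 * r ^ ((n - 1) * d) := by
  obtain ⟨K, hK1, hK⟩ := exists_one_le_mul_norm_sub B
  refine ⟨(3 * K) ^ d, by positivity, ?_⟩
  rintro ρ r κ α ⟨hρ, -, -, -, -, -, hspan⟩ m θ x hθ hx n rfl
  have hd1 : d - 1 + 1 = d := by omega
  obtain ⟨τ, hτ, hτ0⟩ : ∃ τ ∈ Theta0 B r, τ ∉ Submodule.span ℝ (∅ : Set _) := by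
    by_contra! h
    have hle : Submodule.span ℝ (Theta0 B r) ≤ Submodule.span ℝ ∅ := Submodule.span_le.2 h
    rw [hspan, Submodule.span_empty, top_le_iff] at hle
    have hfin : Module.finrank ℝ (EuclideanSpace ℝ (Fin d)) = 0 := by
      rw [← finrank_top ℝ, ← hle, finrank_bot]
    rw [finrank_euclideanSpace_fin] at hfin
    omega
  have hr : 0 ≤ r := (norm_nonneg τ).trans hτ.2
  have hT : 1 ≤ K * r ^ d := by
    have h := hK r hspan ∅ (Set.empty_subset _) τ hτ hτ0 0 (Submodule.zero_mem _)
    rw [sub_zero] at h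
    calc 1 ≤ K * r ^ (d - 1) * ‖τ‖ := h
      _ ≤ K * r ^ (d - 1) * r := by
          gcongr
          exact hτ.2
      _ = K * r ^ d := by rw [mul_assoc, ← pow_succ, hd1]
  have hdist : ∀ S ⊆ Theta0 B r, ∀ τ ∈ Theta0 B r, τ ∉ Submodule.span ℝ S →
      ∀ w ∈ Submodule.span ℝ S, ‖τ‖ ≤ K * r ^ d * ‖τ - w‖ := fun S hS τ hτ hτS w hw =>
    calc ‖τ‖ ≤ r * 1 := by simpa using hτ.2
      _ ≤ r * (K * r ^ (d - 1) * ‖τ - w‖) := by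
          gcongr
          exact hK r hspan S hS τ hτ hτS w hw
      _ = K * r ^ (d - 1 + 1) * ‖τ - w‖ := by ring
      _ = K * r ^ d * ‖τ - w‖ := by rw [hd1]
  have hn : Module.finrank ℝ (Submodule.span ℝ (Set.range θ)) ≤ d := by
    simpa using Submodule.finrank_le (Submodule.span ℝ (Set.range θ))
  refine (norm_projV_chain_le (zero_le_one.trans hρ) hT hdist m θ x hθ hx).trans ?_
  set k := Module.finrank ℝ (Submodule.span ℝ (Set.range θ)) - 1
  have hk : (3 * K) ^ k ≤ (3 * K) ^ d := pow_le_pow_right₀ (by linarith) (by omega)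
  have hR : 0 ≤ ρ ^ α 1 := Real.rpow_nonneg (zero_le_one.trans hρ) _
  calc ρ ^ α 1 * (3 * (K * r ^ d)) ^ k = (3 * K) ^ k * ρ ^ α 1 * r ^ (k * d) := by
        rw [← mul_assoc, mul_pow, ← pow_mul, mul_comm d k]
        ring
    _ ≤ (3 * K) ^ d * ρ ^ α 1 * r ^ (k * d) := by gcongr
end
end
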